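/- Let λ : ℝ × ℝ → (0, ∞) be differentiable at a point (x₀, t₀), and fix η with 0 < η < λ(x₀, t₀). Define, in a neighbourhood of (x₀, t₀) where η < λ(x, t), the fields u(x, t) = η/(π·√(λ(x,t)² − η²)) and v(x, t) = 6η(2η² − λ(x,t)²)/(π·√(λ(x,t)² − η²)). Then the continuity equation ∂_t u + ∂_x v = 0 holds at (x₀, t₀) if and only if λ satisfies the Hopf equation ∂_t λ + 6λ²·∂_x λ = 0 at (x₀, t₀). -/

import Mathlib

/-!
As functions of the band edge `L`, with `s = √(L² - η²)`, the density of states is `u = η / (π s)`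
and, since `2η² - L² = η² - s²`, the flux is `v = 6η² u - (6η/π) s`. From `∂s/∂L = L / s` one gets
`∂u/∂L = c` and `∂v/∂L = 6 (η² + s²) c = 6 L² c` with `c = -ηL / (π s³) ≠ 0`, so the chain rule
gives `∂ₜu + ∂ₓv = c (Λₜ + 6 Λ² Λₓ)`.
-/

theorem deriv_comp_add_deriv_comp_eq_mul {𝕜 : Type*} [NontriviallyNormedField 𝕜]
    {Λ : 𝕜 × 𝕜 → 𝕜} {x₀ t₀ : 𝕜} {u v : 𝕜 → 𝕜} {c speed : 𝕜}
    (ht : DifferentiableAt 𝕜 (fun t => Λ (x₀, t)) t₀)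
    (hx : DifferentiableAt 𝕜 (fun x => Λ (x, t₀)) x₀)
    (hu : HasDerivAt u c (Λ (x₀, t₀))) (hv : HasDerivAt v (speed * c) (Λ (x₀, t₀))) :
    deriv (fun t => u (Λ (x₀, t))) t₀ + deriv (fun x => v (Λ (x, t₀))) x₀ =
      c * (deriv (fun t => Λ (x₀, t)) t₀ + speed * deriv (fun x => Λ (x, t₀)) x₀) := by
  have hut : deriv (fun t => u (Λ (x₀, t))) t₀ = c * deriv (fun t => Λ (x₀, t)) t₀ :=
    (hu.comp t₀ ht.hasDerivAt).deriv
  have hvx : deriv (fun x => v (Λ (x, t₀))) x₀ = speed * c * deriv (fun x => Λ (x, t₀)) x₀ :=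
    (HasDerivAt.comp (h := fun x => Λ (x, t₀)) x₀ hv hx.hasDerivAt).deriv
  rw [hut, hvx]
  ring

theorem hasDerivAt_sqrt_sq_sub_const {a L : ℝ} (h : a < L ^ 2) :
    HasDerivAt (fun l : ℝ => √(l ^ 2 - a)) (L / √(L ^ 2 - a)) L := by
  refine (((hasDerivAt_pow 2 L).sub_const a).sqrt (sub_pos.2 h).ne').congr_deriv ?_
  simp [mul_div_mul_left]

/-- The density of states `u⁽⁰⁾(η; L)` of the genus-0 soliton condensate with band edge `L`.
It takes the junk value `0` when `L² ≤ η²`. -/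
noncomputable def condensateDensity (η L : ℝ) : ℝ :=
  η / (Real.pi * √(L ^ 2 - η ^ 2))

/-- The spectral flux density `v⁽⁰⁾(η; L)` of the genus-0 soliton condensate with band edge `L`.
It takes the junk value `0` when `L² ≤ η²`. -/
noncomputable def condensateFlux (η L : ℝ) : ℝ :=
  6 * η * (2 * η ^ 2 - L ^ 2) / (Real.pi * √(L ^ 2 - η ^ 2))

/-- The derivative `∂u⁽⁰⁾/∂L` of the density of states in the band edge, in closed form. -/
noncomputable def condensateDensityDeriv (η L : ℝ) : ℝ :=
  -(η * L) / (Real.pi * √(L ^ 2 - η ^ 2) ^ 3)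

section

variable {η L : ℝ}

theorem condensateDensityDeriv_ne_zero (hη : η ≠ 0) (h : η ^ 2 < L ^ 2) :
    condensateDensityDeriv η L ≠ 0 := by
  have hL : L ≠ 0 := sq_pos_iff.1 ((sq_nonneg η).trans_lt h)
  have hs : √(L ^ 2 - η ^ 2) ≠ 0 := Real.sqrt_ne_zero'.2 (sub_pos.2 h)
  exact div_ne_zero (neg_ne_zero.2 (mul_ne_zero hη hL))
    (mul_ne_zero Real.pi_ne_zero (pow_ne_zero 3 hs))

theorem hasDerivAt_condensateDensity (h : η ^ 2 < L ^ 2) :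
    HasDerivAt (condensateDensity η) (condensateDensityDeriv η L) L := by
  have hs : √(L ^ 2 - η ^ 2) ≠ 0 := Real.sqrt_ne_zero'.2 (sub_pos.2 h)
  refine ((hasDerivAt_const L η).fun_div ((hasDerivAt_sqrt_sq_sub_const h).const_mul Real.pi)
    (mul_ne_zero Real.pi_ne_zero hs)).congr_deriv ?_
  rw [condensateDensityDeriv]
  field_simp
  ring

theorem condensateFlux_eq (η L : ℝ) :
    condensateFlux η L =
      6 * η ^ 2 * condensateDensity η L - 6 * η / Real.pi * √(L ^ 2 - η ^ 2) :=
  calc condensateFlux η L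
      = 6 * η ^ 2 * condensateDensity η L -
          6 * η / Real.pi * ((L ^ 2 - η ^ 2) / √(L ^ 2 - η ^ 2)) := by
        rw [condensateFlux, condensateDensity]
        ring
    _ = _ := by rw [Real.div_sqrt]

theorem hasDerivAt_condensateFlux (h : η ^ 2 < L ^ 2) :
    HasDerivAt (condensateFlux η) (6 * L ^ 2 * condensateDensityDeriv η L) L := by
  have hs : √(L ^ 2 - η ^ 2) ≠ 0 := Real.sqrt_ne_zero'.2 (sub_pos.2 h)
  have hsq : √(L ^ 2 - η ^ 2) ^ 2 = L ^ 2 - η ^ 2 := Real.sq_sqrt (sub_pos.2 h).le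
  rw [funext (condensateFlux_eq η)]
  refine (((hasDerivAt_condensateDensity h).const_mul (6 * η ^ 2)).fun_sub
    ((hasDerivAt_sqrt_sq_sub_const h).const_mul (6 * η / Real.pi))).congr_deriv ?_
  rw [condensateDensityDeriv]
  field_simp
  rw [hsq]
  ring

end

theorem genus0_kinetic_iff_hopf_general {Λ : ℝ × ℝ → ℝ} {x₀ t₀ η : ℝ}
    (ht : DifferentiableAt ℝ (fun t => Λ (x₀, t)) t₀)
    (hx : DifferentiableAt ℝ (fun x => Λ (x, t₀)) x₀)
    (hη : η ≠ 0) (hlt : η ^ 2 < Λ (x₀, t₀) ^ 2) :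
    deriv (fun t => condensateDensity η (Λ (x₀, t))) t₀ +
        deriv (fun x => condensateFlux η (Λ (x, t₀))) x₀ = 0 ↔
      deriv (fun t => Λ (x₀, t)) t₀ +
        6 * Λ (x₀, t₀) ^ 2 * deriv (fun x => Λ (x, t₀)) x₀ = 0 := by
  rw [deriv_comp_add_deriv_comp_eq_mul ht hx (hasDerivAt_condensateDensity hlt)
    (hasDerivAt_condensateFlux hlt)]
  exact mul_eq_zero_iff_left (condensateDensityDeriv_ne_zero hη hlt)

/-- For a modulated genus-0 KdV soliton condensate with slowly varying spectral edge
`Λ(x,t) > 0`, differentiable at `(x₀,t₀)`, and a fixed spectral parameter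
`0 < η < Λ(x₀,t₀)`, the continuity (kinetic) equation `∂ₜ u + ∂ₓ v = 0` for
`u = η/(π√(Λ²-η²))`, `v = 6η(2η²-Λ²)/(π√(Λ²-η²))` holds at `(x₀,t₀)` if and only if
`Λ` satisfies the Hopf (genus-0 Whitham) equation `Λₜ + 6Λ²Λₓ = 0` there. -/
theorem genus0_kinetic_iff_hopf (Λ : ℝ × ℝ → ℝ) (x₀ t₀ η : ℝ)
    (hpos : ∀ p, 0 < Λ p)
    (hdiff : DifferentiableAt ℝ Λ (x₀, t₀))
    (hη0 : 0 < η) (hηlt : η < Λ (x₀, t₀)) :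
    (deriv (fun t => η / (Real.pi * Real.sqrt ((Λ (x₀, t)) ^ 2 - η ^ 2))) t₀ +
      deriv (fun x =>
        6 * η * (2 * η ^ 2 - (Λ (x, t₀)) ^ 2) /
          (Real.pi * Real.sqrt ((Λ (x, t₀)) ^ 2 - η ^ 2))) x₀ = 0) ↔
    (deriv (fun t => Λ (x₀, t)) t₀ +
      6 * (Λ (x₀, t₀)) ^ 2 * deriv (fun x => Λ (x, t₀)) x₀ = 0) :=
  genus0_kinetic_iff_hopf_general (hdiff.fun_comp' t₀ (by fun_prop))
    (hdiff.fun_comp' x₀ (by fun_prop)) hη0.ne' (pow_lt_pow_left₀ hηlt hη0.le two_ne_zero)
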